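/- Let N ≥ 1 and let ω ∈ Ω be a 1-2 model configuration having at least 31 pairwise distinct infinite {001}-clusters each containing a vertex of the box B_{N+2}. Then there exists a 1-2 model configuration ω′ ∈ Ω such that ω′(e) = ω(e) for every edge e both of whose endpoints lie outside B_{N+4}, and B_N is an encounter box for ω′. -/

import Mathlib

open MeasureTheory

/-- Vertices of the hexagonal lattice: `(x, y, t)` with `t = true` the "upper" vertex. -/
abbrev HexV : Type := ℤ × ℤ × Bool

/-- Edges of the hexagonal lattice: `(x, y, k)` with `k = 0` the a-type (horizontal) edge
joining `(x,y,1)` to `(x,y,0)`, `k = 1` the b-type edge joining `(x,y,1)` to `(x+1,y,0)`,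
`k = 2` the c-type edge joining `(x,y,1)` to `(x,y+1,0)`. -/
abbrev HexE : Type := ℤ × ℤ × Fin 3

/-- A configuration assigns present/absent to each edge. -/
abbrev Config : Type := HexE → Bool

def end1 (e : HexE) : HexV := (e.1, e.2.1, true)

def end2 (e : HexE) : HexV :=
  if e.2.2 = 0 then (e.1, e.2.1, false)
  else if e.2.2 = 1 then (e.1 + 1, e.2.1, false)
  else (e.1, e.2.1 + 1, false)

/-- The edges incident to a vertex, indexed so that index `0` is the a-type (horizontal)
edge, index `1` the b-type edge, index `2` the c-type edge. -/
def edgesAt (v : HexV) : Fin 3 → HexE := fun i =>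
  if v.2.2 then (v.1, v.2.1, i)
  else if i = 0 then (v.1, v.2.1, 0)
  else if i = 1 then (v.1 - 1, v.2.1, 1)
  else (v.1, v.2.1 - 1, 2)

/-- Local configuration of `ω` at `v`: digit `0` (rightmost) is the a-type edge,
digit `1` the b-type edge, digit `2` (leftmost) the c-type edge. -/
def localConf (ω : Config) (v : HexV) : Fin 3 → Bool := fun i => ω (edgesAt v i)

/-- A 1-2 model configuration: every vertex is incident to one or two present edges. -/
def IsConfig (ω : Config) : Prop :=
  ∀ v : HexV,
    1 ≤ (Finset.univ.filter fun i : Fin 3 => localConf ω v i = true).card ∧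
    (Finset.univ.filter fun i : Fin 3 => localConf ω v i = true).card ≤ 2

/-- The local configuration type `{001}` : only the a-type (horizontal) edge is present. -/
def conf001 : Fin 3 → Bool := ![true, false, false]

/-- The six admissible local configuration types `{001},…,{110}`. -/
def validConf (τ : Fin 3 → Bool) : Prop :=
  τ ≠ ![false, false, false] ∧ τ ≠ ![true, true, true]

/-- Vertex weight: `w(001)=w(110)=a`, `w(010)=w(101)=b`, `w(011)=w(100)=c`. -/
def weight (a b c : ℝ) (f : Fin 3 → Bool) : ℝ :=
  match f 2, f 1, f 0 with
  | false, false, true  => a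
  | true,  true,  false => a
  | false, true,  false => b
  | true,  false, true  => b
  | false, true,  true  => c
  | true,  false, false => c
  | false, false, false => 0
  | true,  true,  true  => 0

/-- Adjacency in the hexagonal lattice. -/
def HexAdj (v w : HexV) : Prop :=
  v ≠ w ∧ ∃ e : HexE, (v = end1 e ∨ v = end2 e) ∧ (w = end1 e ∨ w = end2 e)

/-- Adjacency restricted to a vertex set `S`. -/
def adjIn (S : Set HexV) (v w : HexV) : Prop := HexAdj v w ∧ v ∈ S ∧ w ∈ S

/-- The connected component of `v` in the subgraph induced on `S`. -/
def compOf (S : Set HexV) (v : HexV) : Set HexV := {w | Relation.ReflTransGen (adjIn S) v w}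

/-- `C` is a connected component of the subgraph induced on `S`. -/
def IsCompOf (S : Set HexV) (C : Set HexV) : Prop := ∃ v ∈ S, C = compOf S v

/-- Vertices whose local configuration equals `τ`. -/
def confSet (ω : Config) (τ : Fin 3 → Bool) : Set HexV := {v | localConf ω v = τ}

/-- A `τ`-cluster of `ω`. -/
def IsCluster (ω : Config) (τ : Fin 3 → Bool) (C : Set HexV) : Prop :=
  IsCompOf (confSet ω τ) C

/-- The number of infinite `τ`-clusters of `ω`, as an extended natural number. -/
noncomputable def numInfClusters (ω : Config) (τ : Fin 3 → Bool) : ℕ∞ :=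
  {C : Set HexV | IsCluster ω τ C ∧ C.Infinite}.encard

def endsFinset (e : HexE) : Finset HexV := {end1 e, end2 e}

/-- Vertices incident to an edge of `F`. -/
def verts (F : Finset HexE) : Finset HexV := F.biUnion endsFinset

/-- Edges sharing an endpoint with an edge of `F`. -/
def edgeNbhd (F : Finset HexE) : Set HexE :=
  {e' | ∃ e ∈ F,
    end1 e = end1 e' ∨ end1 e = end2 e' ∨ end2 e = end1 e' ∨ end2 e = end2 e'}

/-- Cylinder event: configurations agreeing with `σ` on `S`. -/
def cyl (S : Set HexE) (σ : Config) : Set Config := {ω | ∀ e ∈ S, ω e = σ e}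

/-- A Gibbs measure for the 1-2 model with weights `a`, `b`, `c`. -/
def IsGibbs (a b c : ℝ) (μ : Measure Config) : Prop :=
  IsProbabilityMeasure μ ∧ μ {ω | IsConfig ω} = 1 ∧
  ∀ F : Finset HexE, ∀ σ τ : Config, IsConfig σ → IsConfig τ →
    (∀ e ∉ F, σ e = τ e) →
    μ (cyl (↑F ∪ edgeNbhd F) σ) *
        ENNReal.ofReal (∏ v ∈ verts F, weight a b c (localConf τ v)) =
      μ (cyl (↑F ∪ edgeNbhd F) τ) *
        ENNReal.ofReal (∏ v ∈ verts F, weight a b c (localConf σ v))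

/-- Translation of edges by `g ∈ ℤ²`. -/
def shiftE (g : ℤ × ℤ) (e : HexE) : HexE := (e.1 + g.1, e.2.1 + g.2, e.2.2)

/-- Induced translation action on configurations. -/
def shiftConfig (g : ℤ × ℤ) (ω : Config) : Config := fun e => ω (shiftE g e)

/-- Translation invariance of a measure on configurations. -/
def TransInvariant (μ : Measure Config) : Prop :=
  ∀ g : ℤ × ℤ, μ.map (shiftConfig g) = μ

/-- Ergodicity: every translation-invariant measurable event has measure `0` or `1`. -/
def IsErgodicTI (μ : Measure Config) : Prop :=
  ∀ A : Set Config, MeasurableSet A → (∀ g, shiftConfig g ⁻¹' A = A) → μ A = 0 ∨ μ A = 1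

/-- The box `B_n(i,j)`. -/
def box (n : ℕ) (i j : ℤ) : Set HexV :=
  {v | |v.1 - i| ≤ (n : ℤ) ∧ |v.2.1 - j| ≤ (n : ℤ)}

/-- Vertices outside `B` adjacent to a vertex of `B`. -/
def outerBoundary (B : Set HexV) : Set HexV := {v | v ∉ B ∧ ∃ w ∈ B, HexAdj v w}

/-- `B_N(i,j)` is an encounter box for `ω` with respect to the infinite `{001}`-cluster `C`. -/
def IsEncounterBoxWrt (ω : Config) (N : ℕ) (i j : ℤ) (C : Set HexV) : Prop :=
  IsCluster ω conf001 C ∧ C.Infinite ∧ box N i j ⊆ C ∧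
  (∀ D, IsCompOf (C \ box (N + 2) i j) D → D.Infinite) ∧
  {D : Set HexV | IsCompOf (C \ box (N + 2) i j) D ∧ D.Infinite}.encard = 3

/-- `B_N(i,j)` is an encounter box for `ω`. -/
def IsEncounterBox (ω : Config) (N : ℕ) (i j : ℤ) : Prop :=
  ∃ C : Set HexV, IsEncounterBoxWrt ω N i j C

/-- A 3-partition of `Y`: an unordered triple of pairwise disjoint nonempty sets with union `Y`. -/
def IsThreePartition {α : Type*} (Y : Set α) (P : Set (Set α)) : Prop :=
  ∃ P₁ P₂ P₃ : Set α, P = {P₁, P₂, P₃} ∧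
    P₁.Nonempty ∧ P₂.Nonempty ∧ P₃.Nonempty ∧
    Disjoint P₁ P₂ ∧ Disjoint P₁ P₃ ∧ Disjoint P₂ P₃ ∧
    P₁ ∪ P₂ ∪ P₃ = Y

/-- Two 3-partitions are compatible if their parts can be ordered so that `Q₂ ∪ Q₃ ⊆ P₁`. -/
def CompatiblePartitions {α : Type*} (P Q : Set (Set α)) : Prop :=
  ∃ P₁ ∈ P, ∃ Q₁ ∈ Q, ∀ R ∈ Q, R ≠ Q₁ → R ⊆ P₁

theorem conf_iff (ω : Config) (v : HexV) : v ∈ confSet ω conf001 ↔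
    ω (edgesAt v 0) = true ∧ ω (edgesAt v 1) = false ∧ ω (edgesAt v 2) = false := by
  simp only [confSet, Set.mem_ofPred_eq, funext_iff, Fin.forall_fin_succ, localConf, conf001]
  simp

theorem conf_t (ω : Config) (x y : ℤ) : (x, y, true) ∈ confSet ω conf001 ↔
    ω (x, y, 0) = true ∧ ω (x, y, 1) = false ∧ ω (x, y, 2) = false := by
  rw [conf_iff]; simp [edgesAt]

theorem conf_f (ω : Config) (x y : ℤ) : (x, y, false) ∈ confSet ω conf001 ↔
    ω (x, y, 0) = true ∧ ω (x - 1, y, 1) = false ∧ ω (x, y - 1, 2) = false := by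
  rw [conf_iff]; simp [edgesAt]

/-- not-all-equal -/
def NAE (a b c : Bool) : Prop := ¬ (a = b ∧ b = c)

theorem card_nae (f : Fin 3 → Bool) :
    (1 ≤ (Finset.univ.filter fun i : Fin 3 => f i = true).card ∧
    (Finset.univ.filter fun i : Fin 3 => f i = true).card ≤ 2) ↔ NAE (f 0) (f 1) (f 2) := by
  unfold NAE
  revert f; decide

theorem isConfig_iff (ω : Config) : IsConfig ω ↔
    (∀ x y : ℤ, NAE (ω (x, y, 0)) (ω (x, y, 1)) (ω (x, y, 2))) ∧
    (∀ x y : ℤ, NAE (ω (x, y, 0)) (ω (x - 1, y, 1)) (ω (x, y - 1, 2))) := by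
  unfold IsConfig
  simp only [card_nae]
  constructor
  · intro h
    exact ⟨fun x y => by simpa [localConf, edgesAt] using h (x, y, true),
      fun x y => by simpa [localConf, edgesAt] using h (x, y, false)⟩
  · rintro ⟨h1, h2⟩ ⟨x, y, t⟩
    cases t
    · simpa [localConf, edgesAt] using h2 x y
    · simpa [localConf, edgesAt] using h1 x y

theorem adj_t (x y : ℤ) (w : HexV) : HexAdj (x, y, true) w ↔
    w = (x, y, false) ∨ w = (x + 1, y, false) ∨ w = (x, y + 1, false) := by
  obtain ⟨a, b, t⟩ := w
  constructor
  · rintro ⟨hne, ⟨p, q, k⟩, h1, h2⟩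
    fin_cases k <;> simp [end1, end2] at h1 h2 hne ⊢ <;> grind
  · rintro (h | h | h) <;> rw [h]
    · exact ⟨by simp, (x, y, 0), by simp [end1], by simp [end2]⟩
    · exact ⟨by simp, (x, y, 1), by simp [end1], by simp [end2]⟩
    · exact ⟨by simp, (x, y, 2), by simp [end1], by simp [end2]⟩

theorem adj_symm {v w : HexV} (h : HexAdj v w) : HexAdj w v := by
  obtain ⟨h, e, h1, h2⟩ := h
  exact ⟨h.symm, e, h2, h1⟩

theorem adj_f (x y : ℤ) (w : HexV) : HexAdj (x, y, false) w ↔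
    w = (x, y, true) ∨ w = (x - 1, y, true) ∨ w = (x, y - 1, true) := by
  obtain ⟨a, b, t⟩ := w
  constructor
  · rintro ⟨hne, ⟨p, q, k⟩, h1, h2⟩
    fin_cases k <;> simp [end1, end2] at h1 h2 hne ⊢ <;> grind
  · intro h
    apply adj_symm
    rcases h with (h | h | h) <;> rw [h, adj_t] <;> simp

theorem comp_symm {S : Set HexV} {v w : HexV} (h : w ∈ compOf S v) : v ∈ compOf S w := by
  have : Std.Symm (adjIn S) := ⟨fun a b h => ⟨adj_symm h.1, h.2.2, h.2.1⟩⟩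
  exact Relation.ReflTransGen.stdSymm.symm _ _ h

theorem comp_self (S : Set HexV) (v : HexV) : v ∈ compOf S v := Relation.ReflTransGen.refl

theorem comp_trans {S : Set HexV} {u v w : HexV} (h : v ∈ compOf S u) (h' : w ∈ compOf S v) :
    w ∈ compOf S u := Relation.ReflTransGen.trans h h'

theorem comp_eq {S : Set HexV} {v w : HexV} (h : w ∈ compOf S v) : compOf S w = compOf S v := by
  ext z
  exact ⟨fun hz => comp_trans h hz, fun hz => comp_trans (comp_symm h) hz⟩

theorem comp_sub {S : Set HexV} {v : HexV} (hv : v ∈ S) : compOf S v ⊆ S := by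
  intro w hw
  induction hw with
  | refl => exact hv
  | tail _ h _ => exact h.2.2

theorem comp_step {S : Set HexV} {o v w : HexV} (ho : o ∈ S) (h : v ∈ compOf S o)
    (ha : HexAdj v w) (hw : w ∈ S) : w ∈ compOf S o :=
  Relation.ReflTransGen.tail h ⟨ha, comp_sub ho h, hw⟩

theorem comp_mono {S T : Set HexV} (hST : S ⊆ T) (v : HexV) : compOf S v ⊆ compOf T v := by
  intro w hw
  induction hw with
  | refl => exact comp_self _ _
  | tail _ h ih => exact Relation.ReflTransGen.tail ih ⟨h.1, hST h.2.1, hST h.2.2⟩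

/-- restriction of a component to a subset that contains it -/
theorem comp_restrict {S T : Set HexV} {v : HexV} (hST : T ⊆ S) (h : compOf S v ⊆ T) :
    compOf T v = compOf S v := by
  apply subset_antisymm (comp_mono hST v)
  intro w hw
  induction hw with
  | refl => exact comp_self _ _
  | tail hab hbc ih =>
    exact Relation.ReflTransGen.tail ih ⟨hbc.1, h hab, h (Relation.ReflTransGen.tail hab hbc)⟩

/-- square box -/
def Bx (m : ℤ) : Set HexV := {v | -m ≤ v.1 ∧ v.1 ≤ m ∧ -m ≤ v.2.1 ∧ v.2.1 ≤ m}

theorem box_eq (n : ℕ) : box n 0 0 = Bx n := by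
  ext ⟨x, y, t⟩
  simp only [box, Bx, Set.mem_ofPred_eq, sub_zero, abs_le]
  tauto

theorem Bx_finite (m : ℤ) : (Bx m).Finite := by
  apply Set.Finite.subset
    ((Set.finite_Icc (-m) m).prod ((Set.finite_Icc (-m) m).prod (Set.finite_univ (α := Bool))))
  rintro ⟨x, y, t⟩ ⟨h1, h2, h3, h4⟩
  simp only [Set.mem_prod, Set.mem_Icc, Set.mem_univ, and_true]
  exact ⟨⟨h1, h2⟩, h3, h4⟩

def nA (ω : Config) (m x y : ℤ) : Bool :=
  if x = m - 1 ∧ y = m then !(ω (m - 1, m, 2) && ω (m, m - 1, 1))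
  else if x = -m + 1 ∧ y = -m then !(ω (-m + 1, -m - 1, 2) && ω (-m - 1, -m + 1, 1))
  else if x < -m ∨ m < x ∨ y < -m ∨ m < y ∨ (x = m ∧ y = m) ∨ (x = -m ∧ y = -m) then ω (x, y, 0)
  else true

def nB (ω : Config) (W : HexV → Bool) (m x y : ℤ) : Bool :=
  if x < -m ∨ m - 1 < x ∨ y < -m ∨ m < y then ω (x, y, 1)
  else if y = m then
    if x = m - 1 then ω (m, m - 1, 1) else !(ω (x, m, 2)) && !(W (x, m + 1, false))
  else if y = -m then
    if x = -m then ω (-m - 1, -m + 1, 1)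
    else !(ω (x + 1, -m - 1, 2)) && !(W (x + 1, -m - 1, true))
  else false

def nC (ω : Config) (W : HexV → Bool) (m x y : ℤ) : Bool :=
  if x < -m ∨ m < x ∨ y < -m ∨ m - 1 < y then ω (x, y, 2)
  else if x = m then !(ω (m, y, 1)) && !(W (m + 1, y, false))
  else if x = -m then !(ω (-m - 1, y + 1, 1)) && !(W (-m - 1, y + 1, true))
  else if x = m - 1 ∧ y = m - 1 then ω (m - 2, m, 2)
  else if x = -m + 1 ∧ y = -m then ω (-m + 2, -m - 1, 2)
  else false

def nW (ω : Config) (W : HexV → Bool) (m : ℤ) : Config := fun e =>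
  if e.2.2 = 0 then nA ω m e.1 e.2.1
  else if e.2.2 = 1 then nB ω W m e.1 e.2.1 else nC ω W m e.1 e.2.1

theorem nW0 (ω W m x y) : nW ω W m (x, y, 0) = nA ω m x y := by simp [nW]
theorem nW1 (ω W m x y) : nW ω W m (x, y, 1) = nB ω W m x y := by simp [nW]
theorem nW2 (ω W m x y) : nW ω W m (x, y, 2) = nC ω W m x y := by simp [nW]

/-- forbidden outer vertices -/
def FX (m : ℤ) : Set HexV :=
  {(m + 1, m, false), (m + 1, m - 1, false), (m + 1, m - 2, false),
   (m, m + 1, false), (m - 1, m + 1, false), (m - 2, m + 1, false),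
   (-m - 1, -m, true), (-m - 1, -m + 1, true), (-m - 1, -m + 2, true),
   (-m, -m - 1, true), (-m + 1, -m - 1, true), (-m + 2, -m - 1, true)}

/-- special vertices -/
def Sp (m : ℤ) : Set HexV :=
  {(m, m, true), (m - 1, m, true), (-m, -m, false), (-m + 1, -m, false)}

def GoodW (ω : Config) (W : HexV → Bool) (m : ℤ) : Prop :=
  ∀ v, W v = true → v ∈ confSet ω conf001 ∧ v ∉ Bx m ∧ v ∉ FX m

section
variable {ω : Config} {W : HexV → Bool} {m : ℤ}

theorem nW_config (hm : 3 ≤ m) (hω : IsConfig ω) (hW : GoodW ω W m) : IsConfig (nW ω W m) := by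
  have w1 : W (m - 2, m + 1, false) = false := by
    by_contra h; exact (hW _ (by simpa using h)).2.2 (by simp [FX])
  have w2 : W (-m + 2, -m - 1, true) = false := by
    by_contra h; exact (hW _ (by simpa using h)).2.2 (by simp [FX])
  have w3 : W (m + 1, m - 1, false) = false := by
    by_contra h; exact (hW _ (by simpa using h)).2.2 (by simp [FX])
  have w4 : W (-m - 1, -m + 1, true) = false := by
    by_contra h; exact (hW _ (by simpa using h)).2.2 (by simp [FX])
  rw [isConfig_iff] at hω ⊢
  obtain ⟨h1, h2⟩ := hω
  simp only [nW0, nW1, nW2]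
  constructor
  · intro x y
    have h3 := h1 x y
    clear h1 h2 hW
    simp only [NAE, nA, nB, nC] at *
    grind (splits := 40)
  · intro x y
    have h3 := h2 x y
    clear h1 h2 hW
    simp only [NAE, nA, nB, nC] at *
    grind (splits := 40)

/-- unchanged outside the box -/
theorem nW_out (e : HexE) (h : ¬ (end1 e ∈ Bx m ∧ end2 e ∈ Bx m)) (hm : 3 ≤ m) :
    nW ω W m e = ω e := by
  obtain ⟨x, y, k⟩ := e
  fin_cases k
  · change nW ω W m (x, y, 0) = ω (x, y, 0)
    rw [nW0]
    simp [end1, end2, Bx] at h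
    simp only [nA]
    grind
  · change nW ω W m (x, y, 1) = ω (x, y, 1)
    rw [nW1]
    simp [end1, end2, Bx] at h
    simp only [nB]
    grind
  · change nW ω W m (x, y, 2) = ω (x, y, 2)
    rw [nW2]
    simp [end1, end2, Bx] at h
    simp only [nC]
    grind

theorem conf_out (hm : 3 ≤ m) (v : HexV) (hv : v ∉ Bx m) :
    v ∈ confSet (nW ω W m) conf001 ↔ v ∈ confSet ω conf001 := by
  obtain ⟨x, y, t⟩ := v
  simp only [Bx, Set.mem_ofPred_eq] at hv
  cases t
  · rw [conf_f, conf_f, nW_out, nW_out, nW_out] <;> first | assumption | (simp [end1, end2, Bx]; grind)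
  · rw [conf_t, conf_t, nW_out, nW_out, nW_out] <;> first | assumption | (simp [end1, end2, Bx]; grind)

/-- core -/
def Kc (m : ℤ) : Set HexV :=
  {v | v ∈ Bx (m - 1) ∧ v ≠ (m - 1, m - 1, true) ∧ v ≠ (-m + 1, -m + 1, false)}

theorem Kc_conf (hm : 3 ≤ m) : Kc m ⊆ confSet (nW ω W m) conf001 := by
  rintro ⟨x, y, t⟩ ⟨h1, h2, h3⟩
  simp only [Bx, Set.mem_ofPred_eq] at h1
  cases t
  · simp at h3
    rw [conf_f, nW0, nW1, nW2]
    simp only [nA, nB, nC]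
    grind (splits := 40)
  · simp at h2
    rw [conf_t, nW0, nW1, nW2]
    simp only [nA, nB, nC]
    grind (splits := 40)

theorem exit_W (hm : 3 ≤ m) {u v : HexV} (hu : u ∈ confSet (nW ω W m) conf001)
    (huB : u ∈ Bx m) (hus : u ∉ Sp m) (hv : v ∈ confSet ω conf001)
    (hvB : v ∉ Bx m) (ha : HexAdj u v) : W v = true := by
  obtain ⟨x, y, t⟩ := u
  simp only [Bx, Set.mem_ofPred_eq] at huB hvB
  simp only [Sp, Set.mem_insert_iff, Set.mem_singleton_iff, Prod.mk.injEq] at hus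
  cases t
  · rw [adj_f] at ha
    rw [conf_f, nW0, nW1, nW2] at hu
    rcases ha with rfl | rfl | rfl
    · grind
    · rw [conf_t] at hv
      simp only [nA, nB, nC] at hu
      grind (splits := 40)
    · rw [conf_t] at hv
      simp only [nA, nB, nC] at hu
      grind (splits := 40)
  · rw [adj_t] at ha
    rw [conf_t, nW0, nW1, nW2] at hu
    rcases ha with rfl | rfl | rfl
    · grind
    · rw [conf_f] at hv
      simp only [nA, nB, nC] at hu
      grind (splits := 40)
    · rw [conf_f] at hv
      simp only [nA, nB, nC] at hu
      grind (splits := 40)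

theorem Sp_isolated (hm : 3 ≤ m) (hW : GoodW ω W m) {u v : HexV}
    (hu : u ∈ confSet (nW ω W m) conf001)
    (huB : u ∈ Bx m) (hus : u ∉ Sp m) (hv : v ∈ Sp m) (ha : HexAdj u v) : False := by
  have w1 : W (m - 2, m + 1, false) = false := by
    by_contra h; exact (hW _ (by simpa using h)).2.2 (by simp [FX])
  have w2 : W (-m + 2, -m - 1, true) = false := by
    by_contra h; exact (hW _ (by simpa using h)).2.2 (by simp [FX])
  have w3 : W (m + 1, m - 1, false) = false := by
    by_contra h; exact (hW _ (by simpa using h)).2.2 (by simp [FX])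
  have w4 : W (-m - 1, -m + 1, true) = false := by
    by_contra h; exact (hW _ (by simpa using h)).2.2 (by simp [FX])
  clear hW
  have ha := adj_symm ha
  simp only [Sp, Set.mem_insert_iff, Set.mem_singleton_iff] at hv
  simp only [Bx, Set.mem_ofPred_eq] at huB
  rcases hv with rfl | rfl | rfl | rfl
  · rw [adj_t] at ha
    rcases ha with rfl | rfl | rfl
    · rw [conf_f, nW0, nW1, nW2] at hu
      simp only [nA, nB, nC] at hu
      grind (splits := 40)
    · grind
    · grind
  · rw [adj_t] at ha
    rcases ha with rfl | rfl | rfl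
    · rw [conf_f, nW0, nW1, nW2] at hu
      simp only [nA, nB, nC] at hu
      grind (splits := 40)
    · rw [conf_f, nW0, nW1, nW2] at hu
      simp only [nA, nB, nC] at hu
      grind (splits := 40)
    · grind
  · rw [adj_f] at ha
    rcases ha with rfl | rfl | rfl
    · rw [conf_t, nW0, nW1, nW2] at hu
      simp only [nA, nB, nC] at hu
      grind (splits := 40)
    · grind
    · grind
  · rw [adj_f] at ha
    rcases ha with rfl | rfl | rfl
    · rw [conf_t, nW0, nW1, nW2] at hu
      simp only [nA, nB, nC] at hu
      grind (splits := 40)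
    · rw [conf_t, nW0, nW1, nW2] at hu
      simp only [nA, nB, nC] at hu
      grind (splits := 40)
    · grind

theorem Sp_nbr {u v : HexV} (hv : v ∈ Sp m) (hu : u ∉ Bx m) (hm : 3 ≤ m) (ha : HexAdj u v) :
    u ∈ FX m := by
  have ha := adj_symm ha
  simp only [Bx, Set.mem_ofPred_eq] at hu
  simp only [Sp, Set.mem_insert_iff, Set.mem_singleton_iff] at hv
  simp only [FX, Set.mem_insert_iff, Set.mem_singleton_iff]
  rcases hv with rfl | rfl | rfl | rfl
  · rw [adj_t] at ha
    rcases ha with rfl | rfl | rfl <;> simp at hu ⊢ <;> omega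
  · rw [adj_t] at ha
    rcases ha with rfl | rfl | rfl <;> simp at hu ⊢ <;> omega
  · rw [adj_f] at ha
    rcases ha with rfl | rfl | rfl <;> simp at hu ⊢ <;> omega
  · rw [adj_f] at ha
    rcases ha with rfl | rfl | rfl <;> simp at hu ⊢ <;> omega

/-- entering the box from a vertex of W -/
theorem entry (hm : 3 ≤ m) (hW : GoodW ω W m) {w u : HexV} (hw : W w = true) (ha : HexAdj w u)
    (hu : u ∈ Bx m) : ∃ p k, u ∈ confSet (nW ω W m) conf001 ∧ p ∈ confSet (nW ω W m) conf001 ∧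
      k ∈ Kc m ∧ HexAdj k p ∧ HexAdj p u := by
  obtain ⟨h1, h2, h3⟩ := hW w hw
  clear hW
  obtain ⟨x, y, t⟩ := w
  simp only [FX, Set.mem_insert_iff, Set.mem_singleton_iff, Prod.mk.injEq] at h3
  simp only [Bx, Set.mem_ofPred_eq] at h2 hu
  cases t
  · rw [conf_f] at h1
    rw [adj_f] at ha
    rcases ha with rfl | rfl | rfl
    · exact (h2 hu).elim
    · have hx : x = m + 1 := by grind
      subst hx
      refine ⟨(m, y + 1, false), (m - 1, y + 1, true), ?_, ?_, ?_, ?_, ?_⟩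
      · rw [conf_t, nW0, nW1, nW2]
        simp only [nA, nB, nC]
        grind (splits := 40)
      · rw [conf_f, nW0, nW1, nW2]
        simp only [nA, nB, nC]
        grind (splits := 40)
      · simp [Kc, Bx]; grind
      · rw [adj_t]; simp
      · rw [adj_f]; simp
    · have hy : y = m + 1 := by grind
      subst hy
      refine ⟨(x + 1, m, false), (x + 1, m - 1, true), ?_, ?_, ?_, ?_, ?_⟩
      · rw [conf_t, nW0, nW1, nW2]
        simp only [nA, nB, nC]
        grind (splits := 40)
      · rw [conf_f, nW0, nW1, nW2]
        simp only [nA, nB, nC]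
        grind (splits := 40)
      · simp [Kc, Bx]; grind
      · rw [adj_t]; simp
      · rw [adj_f]; simp
  · rw [conf_t] at h1
    rw [adj_t] at ha
    rcases ha with rfl | rfl | rfl
    · exact (h2 hu).elim
    · have hx : x = -m - 1 := by grind
      subst hx
      refine ⟨(-m, y - 1, true), (-m + 1, y - 1, false), ?_, ?_, ?_, ?_, ?_⟩
      · rw [conf_f, nW0, nW1, nW2]
        simp only [nA, nB, nC]
        grind (splits := 40)
      · rw [conf_t, nW0, nW1, nW2]
        simp only [nA, nB, nC]
        grind (splits := 40)
      · simp [Kc, Bx]; grind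
      · rw [adj_f]; simp
      · rw [adj_t]; simp
    · have hy : y = -m - 1 := by grind
      subst hy
      refine ⟨(x - 1, -m, true), (x - 1, -m + 1, false), ?_, ?_, ?_, ?_, ?_⟩
      · rw [conf_f, nW0, nW1, nW2]
        simp only [nA, nB, nC]
        grind (splits := 40)
      · rw [conf_t, nW0, nW1, nW2]
        simp only [nA, nB, nC]
        grind (splits := 40)
      · simp [Kc, Bx]; grind
      · rw [adj_f]; simp
      · rw [adj_t]; simp

end

theorem Kc_conn {m : ℤ} (hm : 3 ≤ m) {S : Set HexV} (hS : Kc m ⊆ S) :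
    Kc m ⊆ compOf S (0, 0, false) := by
  have h0 : ((0, 0, false) : HexV) ∈ S := hS (by simp [Kc, Bx]; omega)
  have step : ∀ {v w : HexV}, v ∈ compOf S (0, 0, false) → HexAdj v w → w ∈ Kc m →
      w ∈ compOf S (0, 0, false) := fun h ha hw => comp_step h0 h ha (hS hw)
  have up : ∀ n : ℕ, (n : ℤ) ≤ m - 1 → ((0, (n : ℤ), false) : HexV) ∈ compOf S (0, 0, false) ∧
      ((0, (n : ℤ), true) : HexV) ∈ compOf S (0, 0, false) := by
    intro n
    induction n with
    | zero =>
      intro _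
      refine ⟨comp_self _ _, step (comp_self _ _) ?_ ?_⟩
      · rw [adj_f]; simp
      · simp [Kc, Bx]; omega
    | succ k ih =>
      intro hk
      push_cast at hk ⊢
      have h1 := (ih (by omega)).2
      have h2 : ((0, (k : ℤ) + 1, false) : HexV) ∈ compOf S (0, 0, false) := by
        refine step h1 ?_ ?_
        · rw [adj_t]; simp
        · simp [Kc, Bx]; omega
      refine ⟨h2, step h2 ?_ ?_⟩
      · rw [adj_f]; simp
      · simp [Kc, Bx]; omega
  have down : ∀ n : ℕ, (n : ℤ) ≤ m - 1 → ((0, -(n : ℤ), false) : HexV) ∈ compOf S (0, 0, false) ∧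
      ((0, -(n : ℤ), true) : HexV) ∈ compOf S (0, 0, false) := by
    intro n
    induction n with
    | zero => intro h; simpa using up 0 h
    | succ k ih =>
      intro hk
      push_cast at hk ⊢
      have h1 := (ih (by omega)).1
      have h2 : ((0, -1 + -(k : ℤ), true) : HexV) ∈ compOf S (0, 0, false) := by
        refine step h1 ?_ ?_
        · rw [adj_f]; right; right; simp; ring
        · simp [Kc, Bx]; omega
      rw [neg_add_rev]
      refine ⟨step h2 ?_ ?_, h2⟩
      · rw [adj_t]; simp
      · simp [Kc, Bx]; omega
  have col : ∀ y : ℤ, -(m - 1) ≤ y → y ≤ m - 1 → ∀ t, ((0, y, t) : HexV) ∈ compOf S (0, 0, false) := by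
    intro y h1 h2 t
    rcases le_total 0 y with h | h
    · lift y to ℕ using h
      have := up y h2
      cases t
      · exact this.1
      · exact this.2
    · obtain ⟨n, rfl⟩ : ∃ n : ℕ, y = -(n : ℤ) := ⟨y.natAbs, by omega⟩
      have := down n (by omega)
      cases t
      · exact this.1
      · exact this.2
  have right : ∀ y : ℤ, -(m - 1) ≤ y → y ≤ m - 1 → ∀ n : ℕ, (n : ℤ) ≤ m - 1 →
      (((n : ℤ), y, false) : HexV) ∈ compOf S (0, 0, false) := by
    intro y h1 h2 n
    induction n with
    | zero => intro _; exact col y h1 h2 false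
    | succ k ih =>
      intro hk
      push_cast at hk ⊢
      have h3 := ih (by omega)
      have h4 : (((k : ℤ), y, true) : HexV) ∈ compOf S (0, 0, false) := by
        refine step h3 ?_ ?_
        · rw [adj_f]; simp
        · simp [Kc, Bx]; omega
      refine step h4 ?_ ?_
      · rw [adj_t]; simp
      · simp [Kc, Bx]; omega
  have left : ∀ y : ℤ, -(m - 1) ≤ y → y ≤ m - 1 → ∀ n : ℕ, (n : ℤ) ≤ m - 1 →
      ((-(n : ℤ), y, true) : HexV) ∈ compOf S (0, 0, false) := by
    intro y h1 h2 n
    induction n with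
    | zero => intro _; simpa using col y h1 h2 true
    | succ k ih =>
      intro hk
      push_cast at hk ⊢
      have h3 := ih (by omega)
      have h4 : ((-(k : ℤ), y, false) : HexV) ∈ compOf S (0, 0, false) := by
        refine step h3 ?_ ?_
        · rw [adj_t]; simp
        · simp [Kc, Bx]; omega
      refine step h4 ?_ ?_
      · rw [adj_f]; right; left; simp; ring
      · simp [Kc, Bx]; omega
  rintro ⟨x, y, t⟩ hv
  obtain ⟨⟨h1, h2, h3, h4⟩, -⟩ := id hv
  simp only at h1 h2 h3 h4
  rcases le_total 0 x with h | h
  · lift x to ℕ using h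
    have := right y h3 h4 x h2
    cases t
    · exact this
    · exact step this (by rw [adj_f]; simp) hv
  · obtain ⟨n, rfl⟩ : ∃ n : ℕ, x = -(n : ℤ) := ⟨x.natAbs, by omega⟩
    have := left y h3 h4 n (by omega)
    cases t
    · exact step this (by rw [adj_t]; simp) hv
    · exact this

/-- outer boundary vertices are in a finite set -/
theorem adj_Bx {m : ℤ} {u v : HexV} (hu : u ∈ Bx m) (ha : HexAdj u v) : v ∈ Bx (m + 1) := by
  obtain ⟨x, y, t⟩ := u
  simp only [Bx, Set.mem_ofPred_eq] at hu ⊢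
  cases t
  · rw [adj_f] at ha
    rcases ha with rfl | rfl | rfl <;> simp only <;> omega
  · rw [adj_t] at ha
    rcases ha with rfl | rfl | rfl <;> simp only <;> omega

/-- an infinite cluster meeting the box has an infinite outside component touching the box -/
theorem inf_comp {m : ℤ} {S C : Set HexV} (hC : IsCompOf S C) (hinf : C.Infinite)
    (hb : (C ∩ Bx m).Nonempty) :
    ∃ w, w ∈ C ∧ w ∉ Bx m ∧ (∃ u ∈ Bx m, HexAdj w u) ∧ (compOf (S \ Bx m) w).Infinite := by
  obtain ⟨o, hoS, rfl⟩ := hC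
  obtain ⟨b, hbC, hbB⟩ := hb
  by_contra hcon
  push Not at hcon
  have key : ∀ v ∈ compOf S b, v ∉ Bx m → ∃ w, w ∈ compOf S o ∧ w ∉ Bx m ∧
      (∃ u ∈ Bx m, HexAdj w u) ∧ v ∈ compOf (S \ Bx m) w := by
    intro v hv
    induction hv with
    | refl => intro h; exact (h hbB).elim
    | @tail p q hp hpq ih =>
      intro hq
      by_cases hpB : p ∈ Bx m
      · exact ⟨q, comp_trans hbC (Relation.ReflTransGen.tail hp hpq), hq, ⟨p, hpB, adj_symm hpq.1⟩,
          comp_self _ _⟩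
      · obtain ⟨w, h1, h2, h3, h4⟩ := ih hpB
        exact ⟨w, h1, h2, h3, Relation.ReflTransGen.tail h4
          ⟨hpq.1, ⟨hpq.2.1, hpB⟩, hpq.2.2, hq⟩⟩
  apply hinf
  let F : Set HexV := {w | w ∈ compOf S o ∧ w ∉ Bx m ∧ ∃ u ∈ Bx m, HexAdj w u}
  have hF : F.Finite := (Bx_finite (m + 1)).subset (by
    rintro w ⟨-, -, u, hu, ha⟩
    exact adj_Bx hu (adj_symm ha))
  have : (Bx m ∪ ⋃ w ∈ F, compOf (S \ Bx m) w).Finite := by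
    refine (Bx_finite m).union (hF.biUnion ?_)
    rintro w ⟨h1, h2, u, hu, ha⟩
    exact Set.not_infinite.mp (by simpa using hcon w h1 h2 ⟨u, hu, ha⟩)
  refine this.subset ?_
  intro v hv
  by_cases hvB : v ∈ Bx m
  · exact Or.inl hvB
  · right
    obtain ⟨w, h1, h2, h3, h4⟩ := key v (comp_trans (comp_symm hbC) hv) hvB
    simp only [Set.mem_iUnion]
    exact ⟨w, ⟨h1, h2, h3⟩, h4⟩

theorem FX_encard (m : ℤ) : (FX m).encard ≤ 12 := by
  classical
  let L : List HexV := [(m + 1, m, false), (m + 1, m - 1, false), (m + 1, m - 2, false),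
   (m, m + 1, false), (m - 1, m + 1, false), (m - 2, m + 1, false),
   (-m - 1, -m, true), (-m - 1, -m + 1, true), (-m - 1, -m + 2, true),
   (-m, -m - 1, true), (-m + 1, -m - 1, true), (-m + 2, -m - 1, true)]
  have : FX m = (L.toFinset : Set HexV) := by
    ext v; simp [FX, L]
  rw [this, Set.encard_coe_eq_coe_finsetCard]
  exact_mod_cast L.toFinset_card_le

theorem pick {m : ℤ} {S : Set HexV} {P : Set (Set HexV)} (hP : ∀ C ∈ P, IsCompOf S C)
    (h : 31 ≤ P.encard) : ∃ G ⊆ P, G.encard = 3 ∧ ∀ C ∈ G, ∀ x ∈ FX m, x ∉ C := by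
  let Q : Set (Set HexV) := {C ∈ P | ∃ x ∈ FX m, x ∈ C}
  have hQ : Q.encard ≤ 12 := by
    refine le_trans (Set.encard_le_encard (t := compOf S '' FX m) ?_)
      ((Set.encard_image_le _ _).trans (FX_encard m))
    rintro C ⟨hC, x, hx, hxC⟩
    obtain ⟨o, ho, rfl⟩ := hP C hC
    exact ⟨x, hx, comp_eq hxC⟩
  have h3 : 3 ≤ (P \ Q).encard := by
    by_contra hlt
    push Not at hlt
    have h1 : P.encard ≤ (P \ Q).encard + Q.encard := by
      rw [← Set.encard_sdiff_add_encard_of_subset (s := Q) (t := P) (fun C hC => hC.1)]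
    have : P.encard ≤ 3 + 12 := h1.trans (add_le_add hlt.le hQ)
    have h2 := h.trans this
    norm_num at h2
  obtain ⟨G, hG, hG3⟩ := Set.exists_subset_encard_eq h3
  refine ⟨G, fun C hC => (hG hC).1, hG3, fun C hC x hx hxC => (hG hC).2 ⟨(hG hC).1, x, hx, hxC⟩⟩

theorem main_aux (m : ℤ) (hm : 3 ≤ m) (ω : Config) (hω : IsConfig ω)
    (h31 : 31 ≤ {C : Set HexV |
        IsCluster ω conf001 C ∧ C.Infinite ∧ (C ∩ Bx m).Nonempty}.encard) :
    ∃ ω' : Config, IsConfig ω' ∧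
      (∀ e : HexE, ¬ (end1 e ∈ Bx m ∧ end2 e ∈ Bx m) → ω' e = ω e) ∧
      ∃ C, IsCluster ω' conf001 C ∧ C.Infinite ∧ Bx (m - 2) ⊆ C ∧
        (∀ D, IsCompOf (C \ Bx m) D → D.Infinite) ∧
        {D : Set HexV | IsCompOf (C \ Bx m) D ∧ D.Infinite}.encard = 3 := by
  classical
  obtain ⟨G, hGP, hG3, hGX⟩ := pick (m := m) (S := confSet ω conf001) (fun C hC => hC.1) h31
  have hex : ∀ C : Set HexV, ∃ w, C ∈ G → w ∈ C ∧ w ∉ Bx m ∧ (∃ u ∈ Bx m, HexAdj w u) ∧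
      (compOf (confSet ω conf001 \ Bx m) w).Infinite := by
    intro C
    by_cases hC : C ∈ G
    · obtain ⟨w, hw⟩ := inf_comp (hGP hC).1 (hGP hC).2.1 (hGP hC).2.2
      exact ⟨w, fun _ => hw⟩
    · exact ⟨(0, 0, false), fun h => (hC h).elim⟩
  choose f hf using hex
  set S := confSet ω conf001 with hS
  let W : HexV → Bool := fun v => decide (v ∈ f '' G)
  have hCS : ∀ C ∈ G, C ⊆ S := by
    intro C hC
    obtain ⟨o, ho, rfl⟩ := (hGP hC).1
    exact comp_sub ho
  have hCeq : ∀ C ∈ G, ∀ v ∈ C, C = compOf S v := by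
    intro C hC v hv
    obtain ⟨o, ho, rfl⟩ := (hGP hC).1
    exact (comp_eq hv).symm
  have hWiff : ∀ v, W v = true ↔ ∃ C ∈ G, f C = v := by
    intro v; simp [W]
  have hfS : ∀ C ∈ G, f C ∈ S \ Bx m := fun C hC => ⟨hCS C hC (hf C hC).1, (hf C hC).2.1⟩
  let D : Set HexV → Set HexV := fun C => compOf (S \ Bx m) (f C)
  have hDC : ∀ C ∈ G, D C ⊆ C := by
    intro C hC v hv
    rw [hCeq C hC _ (hf C hC).1]
    exact comp_mono Set.sdiff_subset _ hv
  have hDS : ∀ C ∈ G, D C ⊆ S \ Bx m := fun C hC => comp_sub (hfS C hC)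
  have hW : GoodW ω W m := by
    intro v hv
    obtain ⟨C, hC, rfl⟩ := (hWiff v).1 hv
    exact ⟨(hfS C hC).1, (hfS C hC).2, fun h => hGX C hC _ h (hf C hC).1⟩
  set ω' := nW ω W m with hω'
  set S' := confSet ω' conf001 with hS'
  have hK : Kc m ⊆ S' := Kc_conf hm
  have hout : ∀ v, v ∉ Bx m → (v ∈ S' ↔ v ∈ S) := fun v hv => conf_out hm v hv
  let C' := compOf S' (0, 0, false)
  have h0K : ((0, 0, false) : HexV) ∈ Kc m := by simp [Kc, Bx]; omega
  have h0 : ((0, 0, false) : HexV) ∈ S' := hK h0K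
  have hKC : Kc m ⊆ C' := Kc_conn hm hK
  -- upper bound
  have hT : ∀ v ∈ C', (v ∈ S' ∧ v ∈ Bx m ∧ v ∉ Sp m) ∨ ∃ C ∈ G, v ∈ D C := by
    intro v hv
    induction hv with
    | refl =>
      left
      refine ⟨h0, ?_, ?_⟩
      · simp [Bx]; omega
      · simp [Sp]; omega
    | @tail p q hp hpq ih =>
      obtain ⟨hadj, hpS, hqS⟩ := hpq
      by_cases hqB : q ∈ Bx m
      · left
        refine ⟨hqS, hqB, fun hsp => ?_⟩
        rcases ih with ⟨-, h1, h2⟩ | ⟨C, hC, hpD⟩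
        · exact Sp_isolated hm hW hpS h1 h2 hsp hadj
        · exact hGX C hC p (Sp_nbr hsp (hDS C hC hpD).2 hm hadj) (hDC C hC hpD)
      · right
        have hqS1 := (hout q hqB).1 hqS
        rcases ih with ⟨-, h1, h2⟩ | ⟨C, hC, hpD⟩
        · obtain ⟨C, hC, rfl⟩ := (hWiff q).1 (exit_W hm hpS h1 h2 hqS1 hqB hadj)
          exact ⟨C, hC, comp_self _ _⟩
        · exact ⟨C, hC, comp_step (hfS C hC) hpD hadj ⟨hqS1, hqB⟩⟩
  -- lower bound
  have hfC : ∀ C ∈ G, f C ∈ C' := by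
    intro C hC
    obtain ⟨-, hnB, ⟨u, huB, hadj⟩, -⟩ := hf C hC
    obtain ⟨p, k, hu, hp, hk, hkp, hpu⟩ := entry hm hW ((hWiff _).2 ⟨C, hC, rfl⟩) hadj huB
    exact comp_step h0 (comp_step h0 (comp_step h0 (hKC hk) hkp hp) hpu hu) (adj_symm hadj)
      ((hout _ hnB).2 (hfS C hC).1)
  have hsub : S \ Bx m ⊆ S' := fun v hv => (hout v hv.2).2 hv.1
  have hDC' : ∀ C ∈ G, D C ⊆ C' := fun C hC v hv =>
    comp_trans (hfC C hC) (comp_mono hsub _ hv)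
  have hC'S : C' \ Bx m ⊆ S \ Bx m := fun v hv =>
    ⟨(hout v hv.2).1 (comp_sub h0 hv.1), hv.2⟩
  have hDsub : ∀ C ∈ G, D C ⊆ C' \ Bx m := fun C hC v hv => ⟨hDC' C hC hv, (hDS C hC hv).2⟩
  have hcomp : ∀ C ∈ G, ∀ v ∈ D C, compOf (C' \ Bx m) v = D C := by
    intro C hC v hv
    have e1 : compOf (S \ Bx m) v = D C := comp_eq hv
    rw [← e1]
    apply comp_restrict hC'S
    rw [e1]
    exact hDsub C hC
  have hcomps : ∀ E, IsCompOf (C' \ Bx m) E ↔ E ∈ D '' G := by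
    intro E
    constructor
    · rintro ⟨v, hv, rfl⟩
      rcases hT v hv.1 with ⟨-, h, -⟩ | ⟨C, hC, hvD⟩
      · exact (hv.2 h).elim
      · exact ⟨C, hC, (hcomp C hC v hvD).symm⟩
    · rintro ⟨C, hC, rfl⟩
      exact ⟨f C, hDsub C hC (comp_self _ _), (hcomp C hC _ (comp_self _ _)).symm⟩
  have hDinf : ∀ E ∈ D '' G, E.Infinite := by
    rintro E ⟨C, hC, rfl⟩
    exact (hf C hC).2.2.2
  have hDinj : Set.InjOn D G := by
    intro C hC C₂ hC₂ heq
    have h1 : f C ∈ D C₂ := by rw [← heq]; exact comp_self _ _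
    rw [hCeq C hC _ (hf C hC).1, ← hCeq C₂ hC₂ _ (hDC C₂ hC₂ h1)]
  refine ⟨ω', nW_config hm hω hW, fun e he => nW_out e he hm, C', ⟨_, h0, rfl⟩, ?_, ?_, ?_, ?_⟩
  · have : G.Nonempty := by
      rw [← Set.encard_pos, hG3]; norm_num
    obtain ⟨C, hC⟩ := this
    exact ((hf C hC).2.2.2).mono (hDC' C hC)
  · refine subset_trans ?_ hKC
    rintro ⟨x, y, t⟩ ⟨h1, h2, h3, h4⟩
    simp only at h1 h2 h3 h4
    simp [Kc, Bx]
    omega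
  · intro E hE
    exact hDinf E ((hcomps E).1 hE)
  · have : {E : Set HexV | IsCompOf (C' \ Bx m) E ∧ E.Infinite} = D '' G := by
      ext E
      exact ⟨fun h => (hcomps E).1 h.1, fun h => ⟨(hcomps E).2 h, hDinf E h⟩⟩
    rw [this, hDinj.encard_image, hG3]

/-- if `ω` has at least 31 distinct infinite `{001}`-clusters meeting `B_{N+2}`,
then `ω` can be modified, changing only edges with an endpoint in `B_{N+4}`, into a 1-2 model
configuration for which `B_N` is an encounter box. -/
theorem modify_to_encounter_box
    (N : ℕ) (hN : 1 ≤ N) (ω : Config) (hω : IsConfig ω)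
    (h31 : 31 ≤ {C : Set HexV |
        IsCluster ω conf001 C ∧ C.Infinite ∧ (C ∩ box (N + 2) 0 0).Nonempty}.encard) :
    ∃ ω' : Config, IsConfig ω' ∧
      (∀ e : HexE, end1 e ∉ box (N + 4) 0 0 → end2 e ∉ box (N + 4) 0 0 → ω' e = ω e) ∧
      IsEncounterBox ω' N 0 0 := by 
  have hb : box (N + 2) 0 0 = Bx ((N : ℤ) + 2) := by rw [box_eq]; push_cast; rfl
  have hb4 : box (N + 4) 0 0 = Bx ((N : ℤ) + 4) := by rw [box_eq]; push_cast; rfl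
  rw [hb] at h31
  obtain ⟨ω', h1, h2, C, h3, h4, h5, h6, h7⟩ := main_aux ((N : ℤ) + 2) (by omega) ω hω h31
  refine ⟨ω', h1, ?_, C, h3, h4, ?_, ?_, ?_⟩
  · intro e he _
    apply h2
    rintro ⟨⟨a1, a2, a3, a4⟩, -⟩
    apply he
    rw [hb4]
    exact ⟨by omega, by omega, by omega, by omega⟩
  · rw [box_eq]
    simpa using h5
  · rw [hb]; exact h6
  · rw [hb]; exact h7
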